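/- Let Q be an extended Dynkin quiver with minimal positive imaginary root δ and let λ ∈ K^I satisfy λ·δ = 0. Then for any m ≥ 1, every decomposition of mδ as a sum of elements of Σ_λ is a refinement of the decomposition mδ = δ + … + δ (m terms): if α^(1), …, α^(q) ∈ Σ_λ with Σ_{t=1}^q α^(t) = mδ, then there is a partition {1,…,q} = P_1 ∪ … ∪ P_m into disjoint subsets with Σ_{t∈P_s} α^(t) = δ for each s. -/

import Mathlib

open scoped BigOperators

noncomputable section

/-- A quiver with a finite vertex set `I` and a finite arrow set `A`;
`h a` and `t a` are the head and the tail of the arrow `a`. -/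
structure FinQuiver where
  I : Type
  [fintypeI : Fintype I]
  [decEqI : DecidableEq I]
  A : Type
  [fintypeA : Fintype A]
  h : A → I
  t : A → I

attribute [instance] FinQuiver.fintypeI FinQuiver.decEqI FinQuiver.fintypeA

namespace FinQuiver

variable (Q : FinQuiver)

/-- Arrows of the double quiver `Q̄` : every arrow `a : i → j` of `Q` (as `Sum.inl a`)
together with a reverse arrow `a* : j → i` (as `Sum.inr a`). -/
@[reducible] def DA : Type := Q.A ⊕ Q.A

instance : Fintype Q.DA := inferInstanceAs (Fintype (Q.A ⊕ Q.A))

/-- Head of an arrow of the double quiver. -/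
@[reducible] def dh : Q.DA → Q.I := fun a => match a with
  | Sum.inl a => Q.h a
  | Sum.inr a => Q.t a

/-- Tail of an arrow of the double quiver. -/
@[reducible] def dt : Q.DA → Q.I := fun a => match a with
  | Sum.inl a => Q.t a
  | Sum.inr a => Q.h a

/-- The symmetric bilinear form
`(α,β) = ∑_{i∈I} 2 α_i β_i − ∑_{a∈Q̄} α_{h(a)} β_{t(a)}` on `ℤ^I`. -/
def bil (α β : Q.I → ℤ) : ℤ :=
  (∑ i, 2 * α i * β i) - ∑ a : Q.DA, α (Q.dh a) * β (Q.dt a)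

/-- `p(α) = 1 − q(α) = 1 − α·α + ∑_{a ∈ Q} α_{t(a)} α_{h(a)}`. -/
def pp (α : Q.I → ℤ) : ℤ :=
  1 - (∑ i, α i * α i) + ∑ a : Q.A, α (Q.t a) * α (Q.h a)

/-- The coordinate vector `ε_i` at a vertex `i`. -/
def ev (i : Q.I) : Q.I → ℤ := fun j => if j = i then 1 else 0

/-- The coordinate vector of a vertex, as a vector of natural numbers. -/
def evN (i : Q.I) : Q.I → ℕ := fun j => if j = i then 1 else 0

/-- A vertex is loopfree if no arrow has both its head and its tail there. -/
def Loopfree (i : Q.I) : Prop := ∀ a : Q.A, ¬ (Q.h a = i ∧ Q.t a = i)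

/-- The reflection `s_i(α) = α − (α,ε_i) ε_i` at a (loopfree) vertex `i`. -/
def refl (i : Q.I) (α : Q.I → ℤ) : Q.I → ℤ := α - Q.bil α (Q.ev i) • Q.ev i

/-- Two vertices are joined by some arrow. -/
def Adj (i j : Q.I) : Prop :=
  ∃ a : Q.A, (Q.h a = i ∧ Q.t a = j) ∨ (Q.h a = j ∧ Q.t a = i)

/-- The quiver is connected. -/
def Connected : Prop := ∀ i j : Q.I, Relation.ReflTransGen Q.Adj i j

/-- The support of the vector `α` is connected in `Q`. -/
def SuppConnected (α : Q.I → ℤ) : Prop :=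
  ∀ i j : Q.I, α i ≠ 0 → α j ≠ 0 →
    Relation.ReflTransGen (fun x y => α x ≠ 0 ∧ α y ≠ 0 ∧ Q.Adj x y) i j

/-- The fundamental region: nonzero nonnegative vectors with connected support
such that `(α, ε_i) ≤ 0` for every vertex `i`. -/
def InFund (α : Q.I → ℤ) : Prop :=
  α ≠ 0 ∧ (∀ i, 0 ≤ α i) ∧ Q.SuppConnected α ∧ ∀ i, Q.bil α (Q.ev i) ≤ 0

/-- The roots of the Kac root system attached to `Q` : the real roots form the orbit
of the simple roots (coordinate vectors at loopfree vertices) under the reflections at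
loopfree vertices, and the imaginary roots form the orbit of `±(fundamental region)`
under these reflections. -/
inductive IsRoot : (Q.I → ℤ) → Prop
  | simple (i : Q.I) (hi : Q.Loopfree i) : IsRoot (Q.ev i)
  | fund (α : Q.I → ℤ) (hα : Q.InFund α) : IsRoot α
  | neg_fund (α : Q.I → ℤ) (hα : Q.InFund α) : IsRoot (-α)
  | reflect (i : Q.I) (hi : Q.Loopfree i) (α : Q.I → ℤ) (hα : IsRoot α) :
      IsRoot (Q.refl i α)

/-- Positive roots: roots all of whose components are nonnegative. -/
def IsPosRoot (α : Q.I → ℤ) : Prop := Q.IsRoot α ∧ (∀ i, 0 ≤ α i) ∧ α ≠ 0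

/-- The Tits form is positive semidefinite. -/
def PosSemidef : Prop := ∀ α : Q.I → ℤ, 0 ≤ Q.bil α α

/-- The Tits form is positive definite. -/
def PosDef : Prop := Q.PosSemidef ∧ ∀ α : Q.I → ℤ, Q.bil α α = 0 → α = 0

/-- Dynkin quivers: connected, with positive definite Tits form. -/
def IsDynkin : Prop := Q.Connected ∧ Q.PosDef

/-- Extended Dynkin quivers: connected, with positive semidefinite but not
positive definite Tits form. -/
def IsExtDynkin : Prop := Q.Connected ∧ Q.PosSemidef ∧ ¬ Q.PosDef

/-- `δ` is the minimal positive imaginary root of an extended Dynkin quiver: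
the minimal nonzero nonnegative vector in the radical of the Tits form. -/
def IsMinImag (δ : Q.I → ℤ) : Prop :=
  (∀ i, 0 ≤ δ i) ∧ δ ≠ 0 ∧ (∀ i, Q.bil δ (Q.ev i) = 0) ∧
    ∀ β : Q.I → ℤ, (∀ i, 0 ≤ β i) → β ≠ 0 → (∀ i, Q.bil β (Q.ev i) = 0) →
      ∀ i, δ i ≤ β i

/-- The subquiver of `Q` on a subset `S` of vertices and a subset `B` of arrows. -/
def restrict (S : Set Q.I) (B : Set Q.A) (hh : ∀ a ∈ B, Q.h a ∈ S)
    (ht : ∀ a ∈ B, Q.t a ∈ S) : FinQuiver :=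
  { I := S
    fintypeI := Fintype.ofFinite S
    decEqI := Classical.decEq _
    A := B
    fintypeA := Fintype.ofFinite B
    h := fun a => ⟨Q.h a.1, hh a.1 a.2⟩
    t := fun a => ⟨Q.t a.1, ht a.1 a.2⟩ }

/-- The support quiver of a vector: the full subquiver on the support of `β`. -/
def suppQuiver (β : Q.I → ℤ) : FinQuiver :=
  Q.restrict {i | β i ≠ 0} {a | β (Q.h a) ≠ 0 ∧ β (Q.t a) ≠ 0}
    (fun _ ha => ha.1) (fun _ ha => ha.2)

/-- A dimension vector (of natural numbers), viewed in `ℤ^I`. -/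
def toZ (α : Q.I → ℕ) : Q.I → ℤ := fun i => (α i : ℤ)

/-- An oriented cycle in the double quiver `Q̄`, consisting of `n+1` arrows,
the tail of each arrow being the head of the (cyclically) next one. -/
structure Cyc (Q' : FinQuiver) where
  n : ℕ
  ar : Fin (n + 1) → Q'.DA
  compat : ∀ i : Fin (n + 1), Q'.dt (ar i) = Q'.dh (ar (i + 1))

section WithField

variable (K : Type) [Field K]

/-- `λ·α = ∑_i λ_i α_i`. -/
def pair (l : Q.I → K) (α : Q.I → ℤ) : K := ∑ i, l i * (α i : K)

/-- `R_λ^+`, the set of positive roots `α` with `λ·α = 0`. -/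
def Rplus (l : Q.I → K) : Set (Q.I → ℤ) :=
  {α | Q.IsPosRoot α ∧ Q.pair K l α = 0}

/-- `ℕ R_λ^+`, the set of sums (including the empty sum `0`) of elements of `R_λ^+`. -/
def NRplus (l : Q.I → K) : Set (Q.I → ℤ) :=
  (AddSubmonoid.closure (Q.Rplus K l) : AddSubmonoid (Q.I → ℤ))

/-- `Σ_λ` : the elements `α ∈ R_λ^+` with `p(α) > ∑ p(β⁽ᵗ⁾)` for every decomposition
of `α` as a sum of at least two elements `β⁽ᵗ⁾` of `R_λ^+`. -/
def SigmaSet (l : Q.I → K) : Set (Q.I → ℤ) :=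
  {α | α ∈ Q.Rplus K l ∧
    ∀ (n : ℕ) (β : Fin n → (Q.I → ℤ)), 2 ≤ n → (∀ j, β j ∈ Q.Rplus K l) →
      α = ∑ j, β j → (∑ j, Q.pp (β j)) < Q.pp α}

/-- The dual reflection `r_i(λ)_j = λ_j − (ε_i,ε_j) λ_i`. -/
def coRefl (i : Q.I) (l : Q.I → K) : Q.I → K :=
  fun j => l j - (Q.bil (Q.ev i) (Q.ev j) : ℤ) * l i

/-- A single admissible reflection applied to the pair `(λ, α)`:
a reflection at a loopfree vertex `i` with `λ_i ≠ 0`. -/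
def AdmStep (x y : (Q.I → K) × (Q.I → ℤ)) : Prop :=
  ∃ i : Q.I, Q.Loopfree i ∧ x.1 i ≠ 0 ∧ y.1 = Q.coRefl K i x.1 ∧ y.2 = Q.refl i x.2

/-- `(ν,β)` is obtained from `(λ,α)` by a sequence of admissible reflections:
the two pairs lie in the same class of the equivalence relation generated by
admissible reflections. -/
def AdmEquiv (x y : (Q.I → K) × (Q.I → ℤ)) : Prop :=
  Relation.EqvGen (Q.AdmStep K) x y

/-- The space `Rep(Q̄,α)` of representations of the double quiver. -/
def Rep (α : Q.I → ℕ) : Type :=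
  ∀ a : Q.DA, Matrix (Fin (α (Q.dh a))) (Fin (α (Q.dt a))) K

/-- The moment map
`μ_α(x)_i = ∑_{a∈Q, h(a)=i} x_a x_{a*} − ∑_{a∈Q, t(a)=i} x_{a*} x_a`. -/
def moment (α : Q.I → ℕ) (x : Q.Rep K α) (i : Q.I) :
    Matrix (Fin (α i)) (Fin (α i)) K :=
  (∑ a : Q.A, if h : Q.h a = i then
      (x (Sum.inl a) * x (Sum.inr a)).submatrix
        (Fin.cast (congrArg α h).symm) (Fin.cast (congrArg α h).symm)
    else 0)
  - ∑ a : Q.A, if h : Q.t a = i then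
      (x (Sum.inr a) * x (Sum.inl a)).submatrix
        (Fin.cast (congrArg α h).symm) (Fin.cast (congrArg α h).symm)
    else 0

/-- The fibre `μ_α^{-1}(λ)` of the moment map over (the central element
corresponding to) `λ`. -/
def MomentFiber (l : Q.I → K) (α : Q.I → ℕ) : Set (Q.Rep K α) :=
  {x | ∀ i : Q.I, Q.moment K α x i = l i • (1 : Matrix (Fin (α i)) (Fin (α i)) K)}

/-- The group `∏_i GL(α_i,K)`; it acts on `Rep(Q̄,α)` by conjugation, with the same
orbits and the same invariant functions as `G(α) = (∏_i GL(α_i,K))/K^*`. -/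
def Gl (α : Q.I → ℕ) : Type := ∀ i : Q.I, Matrix.GeneralLinearGroup (Fin (α i)) K

/-- The conjugation action of `∏_i GL(α_i,K)` on `Rep(Q̄,α)`. -/
def glAct (α : Q.I → ℕ) (g : Q.Gl K α) (x : Q.Rep K α) : Q.Rep K α :=
  fun a => (g (Q.dh a) : Matrix (Fin (α (Q.dh a))) (Fin (α (Q.dh a))) K) * x a *
    (((g (Q.dt a))⁻¹ : Matrix.GeneralLinearGroup (Fin (α (Q.dt a))) K) :
      Matrix (Fin (α (Q.dt a))) (Fin (α (Q.dt a))) K)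

/-- Coordinates on `Rep(Q̄,α)`: matrix entries. -/
def Coords (α : Q.I → ℕ) : Type :=
  Σ a : Q.DA, Fin (α (Q.dh a)) × Fin (α (Q.dt a))

/-- The coordinate ring `K[V]` of a subset `V` of `Rep(Q̄,α)` : the algebra of
`K`-valued functions on `V` which are restrictions of polynomial functions. -/
def fnRing (α : Q.I → ℕ) (V : Set (Q.Rep K α)) : Subalgebra K (↥V → K) :=
  (MvPolynomial.aeval
    (fun c : Q.Coords α => fun v : ↥V => v.1 c.1 c.2.1 c.2.2) :
    MvPolynomial (Q.Coords α) K →ₐ[K] (↥V → K)).range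

end WithField

end FinQuiver

/-- The subalgebra of functions invariant under a relation (e.g. the orbit
relation of a group action). -/
def relInv (K : Type) [Field K] {V : Type} (R : V → V → Prop) :
    Subalgebra K (V → K) where
  carrier := {f | ∀ x y : V, R x y → f x = f y}
  mul_mem' := by
    intro f g hf hg x y hxy
    simp only [Pi.mul_apply, hf x y hxy, hg x y hxy]
  one_mem' := fun x y _ => rfl
  add_mem' := by
    intro f g hf hg x y hxy
    simp only [Pi.add_apply, hf x y hxy, hg x y hxy]
  zero_mem' := fun x y _ => rfl
  algebraMap_mem' := fun c x y _ => rfl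

namespace FinQuiver

variable (Q : FinQuiver) (K : Type) [Field K]

/-- The coordinate ring of the Marsden–Weinstein reduction
`N(λ,α) = μ_α^{-1}(λ) ⫽ G(α)` : the `G(α)`-invariant functions in the coordinate
ring of `μ_α^{-1}(λ)`.  Two such reductions are isomorphic as (affine) varieties
exactly when these `K`-algebras are isomorphic. -/
def InvRing (l : Q.I → K) (α : Q.I → ℕ) :
    Subalgebra K (↥(Q.MomentFiber K l α) → K) :=
  Q.fnRing K α (Q.MomentFiber K l α) ⊓
    relInv K (fun x y : ↥(Q.MomentFiber K l α) =>
      ∃ g : Q.Gl K α, y.1 = Q.glAct K α g x.1)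

/-- Index type for a product `∏_t X_t^{m_t}`. -/
@[reducible] def SymIdx (s : ℕ) (m : Fin s → ℕ) : Type := Σ t : Fin s, Fin (m t)

/-- The product `∏_{t} Rep(Q̄, d_t)^{m_t}` of representation spaces. -/
def SymRep (s : ℕ) (m : Fin s → ℕ) (d : Fin s → (Q.I → ℕ)) : Type :=
  ∀ p : SymIdx s m, Q.Rep K (d p.1)

/-- The product `∏_t μ_{d_t}^{-1}(λ)^{m_t}` of moment map fibres. -/
def SymFiber (s : ℕ) (m : Fin s → ℕ) (d : Fin s → (Q.I → ℕ)) (l : Q.I → K) :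
    Set (Q.SymRep K s m d) :=
  {x | ∀ p : SymIdx s m, x p ∈ Q.MomentFiber K l (d p.1)}

/-- Polynomial functions on the product of fibres. -/
def symFnRing (s : ℕ) (m : Fin s → ℕ) (d : Fin s → (Q.I → ℕ)) (l : Q.I → K) :
    Subalgebra K (↥(Q.SymFiber K s m d l) → K) :=
  (MvPolynomial.aeval
    (fun c : Σ p : SymIdx s m, Q.Coords (d p.1) =>
      fun v : ↥(Q.SymFiber K s m d l) => v.1 c.1 c.2.1 c.2.2.1 c.2.2.2) :
    MvPolynomial (Σ p : SymIdx s m, Q.Coords (d p.1)) K →ₐ[K]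
      (↥(Q.SymFiber K s m d l) → K)).range

/-- The componentwise action of the product of the groups `∏ GL(d_t)^{m_t}`. -/
def symGlAct (s : ℕ) (m : Fin s → ℕ) (d : Fin s → (Q.I → ℕ))
    (g : ∀ p : SymIdx s m, Q.Gl K (d p.1)) (x : Q.SymRep K s m d) :
    Q.SymRep K s m d :=
  fun p => Q.glAct K (d p.1) (g p) (x p)

/-- The action of `∏_t S_{m_t}` permuting the factors of each `X_t^{m_t}`. -/
def symPermAct (s : ℕ) (m : Fin s → ℕ) (d : Fin s → (Q.I → ℕ))
    (π : ∀ t : Fin s, Equiv.Perm (Fin (m t))) (x : Q.SymRep K s m d) :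
    Q.SymRep K s m d :=
  fun p => x ⟨p.1, π p.1 p.2⟩

/-- The coordinate ring of the product of symmetric products
`∏_t S^{m_t} N(λ, d_t)` of Marsden–Weinstein reductions: functions on
`∏_t μ_{d_t}^{-1}(λ)^{m_t}` which are polynomial, invariant under all the groups
`G(d_t)` acting on the separate factors, and symmetric under permutations of the
`m_t` factors of each type `t`. -/
def SymInvRing (s : ℕ) (m : Fin s → ℕ) (d : Fin s → (Q.I → ℕ)) (l : Q.I → K) :
    Subalgebra K (↥(Q.SymFiber K s m d l) → K) :=
  Q.symFnRing K s m d l ⊓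
    relInv K (fun x y : ↥(Q.SymFiber K s m d l) =>
      ∃ g : ∀ p : SymIdx s m, Q.Gl K (d p.1), y.1 = Q.symGlAct K s m d g x.1) ⊓
    relInv K (fun x y : ↥(Q.SymFiber K s m d l) =>
      ∃ π : ∀ t : Fin s, Equiv.Perm (Fin (m t)), y.1 = Q.symPermAct K s m d π x.1)

/-- The trace function `tr_p` of an oriented cycle `p` in `Q̄` :
`tr_p(x) = tr(x_{a_1} ⋯ x_{a_ℓ})`, written out via matrix entries. -/
def cycTr (α : Q.I → ℕ) (p : Q.Cyc) (x : Q.Rep K α) : K :=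
  ∑ c : ∀ i : Fin (p.n + 1), Fin (α (Q.dh (p.ar i))),
    ∏ i : Fin (p.n + 1),
      x (p.ar i) (c i) (Fin.cast (congrArg α (p.compat i)).symm (c (i + 1)))

/-- `U` is a subrepresentation of the `Π^λ`-module given by the point
`x ∈ Rep(Q̄,α)` : a collection of subspaces stable under all the maps `x_a`. -/
def SubRep (α : Q.I → ℕ) (x : Q.Rep K α)
    (U : ∀ i : Q.I, Submodule K (Fin (α i) → K)) : Prop :=
  ∀ a : Q.DA, ∀ v ∈ U (Q.dt a), (x a).mulVec v ∈ U (Q.dh a)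

/-- The module given by `x` has the simple module `S_{i₀}` (dimension vector
`ε_{i₀}`, all arrows acting as zero) as a composition factor: it has a subquotient
of dimension vector `ε_{i₀}` on which all arrows act as zero. -/
def HasSFactor (α : Q.I → ℕ) (i0 : Q.I) (x : Q.Rep K α) : Prop :=
  ∃ U W : ∀ i : Q.I, Submodule K (Fin (α i) → K),
    Q.SubRep K α x U ∧ Q.SubRep K α x W ∧ (∀ i, U i ≤ W i) ∧
    (∀ i, Module.finrank K (W i) =
      Module.finrank K (U i) + (if i = i0 then 1 else 0)) ∧
    (∀ a : Q.DA, Q.dh a = i0 → Q.dt a = i0 →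
      ∀ v ∈ W (Q.dt a), (x a).mulVec v ∈ U (Q.dh a))

/-- `W/U` is a simple subquotient of the module given by `x`; the simple
subquotients of a module are, up to isomorphism, exactly its composition factors. -/
def SimpleSubquot (α : Q.I → ℕ) (x : Q.Rep K α)
    (U W : ∀ i : Q.I, Submodule K (Fin (α i) → K)) : Prop :=
  Q.SubRep K α x U ∧ Q.SubRep K α x W ∧ (∀ i, U i ≤ W i) ∧ U ≠ W ∧
    ∀ V : ∀ i : Q.I, Submodule K (Fin (α i) → K),
      Q.SubRep K α x V → (∀ i, U i ≤ V i) → (∀ i, V i ≤ W i) → V = U ∨ V = W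

/-- The direct sum map `∏_{j=1}^m Rep(Q̄,δ) → Rep(Q̄,mδ)` (block diagonal). -/
def dsMap (δ : Q.I → ℕ) (m : ℕ) (y : Fin m → Q.Rep K δ) :
    Q.Rep K (fun i => m * δ i) :=
  fun a => Matrix.of fun r c =>
    if (finProdFinEquiv.symm r).1 = (finProdFinEquiv.symm c).1 then
      y (finProdFinEquiv.symm r).1 a (finProdFinEquiv.symm r).2
        (finProdFinEquiv.symm c).2
    else 0

end FinQuiver


namespace FinQuiver

variable (Q : FinQuiver)

lemma bil_eq (x y : Q.I → ℤ) : Q.bil x y = (∑ i, 2 * x i * y i) -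
    ∑ a : Q.A, (x (Q.h a) * y (Q.t a) + x (Q.t a) * y (Q.h a)) := by
  unfold bil
  rw [Fintype.sum_sum_type, ← Finset.sum_add_distrib]

lemma bil_comm (x y : Q.I → ℤ) : Q.bil x y = Q.bil y x := by
  rw [bil_eq, bil_eq]
  congr 1
  · exact Finset.sum_congr rfl fun i _ => by ring
  · exact Finset.sum_congr rfl fun i _ => by ring

lemma bil_add_right (x y z : Q.I → ℤ) : Q.bil x (y + z) = Q.bil x y + Q.bil x z := by
  simp only [bil_eq, Pi.add_apply, mul_add, Finset.sum_add_distrib]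
  ring

lemma bil_smul_right (n : ℤ) (x y : Q.I → ℤ) : Q.bil x (n • y) = n * Q.bil x y := by
  simp only [bil_eq, Pi.smul_apply, smul_eq_mul, mul_sub, Finset.mul_sum]
  congr 1
  · exact Finset.sum_congr rfl fun i _ => by ring
  · exact Finset.sum_congr rfl fun i _ => by ring

lemma bil_add_left (x y z : Q.I → ℤ) : Q.bil (y + z) x = Q.bil y x + Q.bil z x := by
  rw [bil_comm, bil_add_right, bil_comm, bil_comm Q x z]

lemma bil_smul_left (n : ℤ) (x y : Q.I → ℤ) : Q.bil (n • y) x = n * Q.bil y x := by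
  rw [bil_comm, bil_smul_right, bil_comm]

lemma bil_zero_right (x : Q.I → ℤ) : Q.bil x 0 = 0 := by
  simp [bil_eq]

lemma bil_sum_right {ι : Type} (s : Finset ι) (x : Q.I → ℤ) (f : ι → Q.I → ℤ) :
    Q.bil x (∑ t ∈ s, f t) = ∑ t ∈ s, Q.bil x (f t) := by
  classical
  induction s using Finset.induction_on with
  | empty => simp [bil_zero_right]
  | insert b s hb ih => rw [Finset.sum_insert hb, Finset.sum_insert hb, bil_add_right, ih]

lemma eq_sum_ev (x : Q.I → ℤ) : x = ∑ i, x i • Q.ev i := by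
  funext j
  simp [ev, Finset.sum_apply]

lemma bil_expand (x y : Q.I → ℤ) : Q.bil x y = ∑ i, y i * Q.bil x (Q.ev i) := by
  conv_lhs => rw [eq_sum_ev Q y]
  rw [bil_sum_right]
  exact Finset.sum_congr rfl fun i _ => bil_smul_right ..

lemma bil_self (x : Q.I → ℤ) : Q.bil x x = 2 * (1 - Q.pp x) := by
  rw [bil_eq, pp]
  have h1 : ∑ i, 2 * x i * x i = 2 * ∑ i, x i * x i := by
    rw [Finset.mul_sum]; exact Finset.sum_congr rfl fun i _ => by ring
  have h2 : ∑ a : Q.A, (x (Q.h a) * x (Q.t a) + x (Q.t a) * x (Q.h a))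
      = 2 * ∑ a : Q.A, x (Q.t a) * x (Q.h a) := by
    rw [Finset.mul_sum]; exact Finset.sum_congr rfl fun i _ => by ring
  rw [h1, h2]; ring

lemma bil_nonpos (x y : Q.I → ℤ) (hx : ∀ i, 0 ≤ x i) (hy : ∀ i, 0 ≤ y i)
    (h : ∀ i, x i * y i = 0) : Q.bil x y ≤ 0 := by
  rw [bil_eq]
  have h1 : ∑ i, 2 * x i * y i = 0 :=
    Finset.sum_eq_zero fun i _ => by rw [mul_assoc, h]; simp
  have h2 : 0 ≤ ∑ a : Q.A, (x (Q.h a) * y (Q.t a) + x (Q.t a) * y (Q.h a)) :=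
    Finset.sum_nonneg fun a _ =>
      add_nonneg (mul_nonneg (hx _) (hy _)) (mul_nonneg (hx _) (hy _))
  linarith

variable {Q}

lemma rad_of_null (hP : Q.PosSemidef) (x y : Q.I → ℤ) (hx : Q.bil x x = 0) :
    Q.bil x y = 0 := by
  by_contra hc
  have hd := hP y
  have h := hP ((-(Q.bil y y + 1) * Q.bil x y) • x + y)
  rw [bil_add_left, bil_add_right, bil_add_right, bil_smul_left, bil_smul_right,
    bil_smul_left, bil_smul_right, hx, bil_comm Q y x] at h
  have h2 : 1 ≤ Q.bil x y * Q.bil x y := by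
    have := mul_self_pos.mpr hc
    omega
  nlinarith

lemma pp_ev_of_loopfree (i : Q.I) (hi : Q.Loopfree i) : Q.pp (Q.ev i) = 0 := by
  unfold pp
  have h1 : ∑ j, Q.ev i j * Q.ev i j = 1 := by simp [ev]
  have h2 : ∑ a : Q.A, Q.ev i (Q.t a) * Q.ev i (Q.h a) = 0 := by
    refine Finset.sum_eq_zero fun a _ => ?_
    have := hi a
    by_cases h : Q.h a = i
    · have : Q.t a ≠ i := fun h' => this ⟨h, h'⟩
      simp [ev, this]
    · simp [ev, h]
  rw [h1, h2]; norm_num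

lemma null_of_loop (hP : Q.PosSemidef) (i : Q.I) (hi : ¬ Q.Loopfree i) :
    Q.bil (Q.ev i) (Q.ev i) = 0 := by
  have h0 := hP (Q.ev i)
  have hpp : 1 ≤ Q.pp (Q.ev i) := by
    unfold pp
    have h1 : ∑ j, Q.ev i j * Q.ev i j = 1 := by simp [ev]
    have h2 : 1 ≤ ∑ a : Q.A, Q.ev i (Q.t a) * Q.ev i (Q.h a) := by
      unfold Loopfree at hi
      push Not at hi
      obtain ⟨a, ha, hb⟩ := hi
      have := Finset.single_le_sum (f := fun a : Q.A => Q.ev i (Q.t a) * Q.ev i (Q.h a))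
        (fun b _ => by simp only [ev]; split_ifs <;> simp) (Finset.mem_univ a)
      simpa [ev, ha, hb] using this
    rw [h1]; linarith
  rw [bil_self] at h0 ⊢
  linarith

lemma bil_refl (i : Q.I) (hi : Q.Loopfree i) (x : Q.I → ℤ) :
    Q.bil (Q.refl i x) (Q.refl i x) = Q.bil x x := by
  have h2 : Q.bil (Q.ev i) (Q.ev i) = 2 := by rw [bil_self, pp_ev_of_loopfree i hi]; norm_num
  have : Q.refl i x = x + (-(Q.bil x (Q.ev i))) • Q.ev i := by
    rw [refl, neg_smul, sub_eq_add_neg]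
  rw [this, bil_add_left, bil_add_right, bil_add_right, bil_smul_left, bil_smul_right,
    bil_smul_left, bil_smul_right, h2, bil_comm Q (Q.ev i) x]
  ring

lemma pp_refl (i : Q.I) (hi : Q.Loopfree i) (x : Q.I → ℤ) :
    Q.pp (Q.refl i x) = Q.pp x := by
  have := bil_refl i hi x
  rw [bil_self, bil_self] at this
  linarith

lemma refl_refl' (i : Q.I) (hi : Q.Loopfree i) (x : Q.I → ℤ) :
    Q.refl i (Q.refl i x) = x := by
  have h2 : Q.bil (Q.ev i) (Q.ev i) = 2 := by rw [bil_self, pp_ev_of_loopfree i hi]; norm_num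
  have h : ∀ y, Q.refl i y = y + (-(Q.bil y (Q.ev i))) • Q.ev i := by
    intro y; rw [refl, neg_smul, sub_eq_add_neg]
  have h3 : Q.bil (Q.refl i x) (Q.ev i) = - Q.bil x (Q.ev i) := by
    rw [h, bil_add_left, bil_smul_left, h2]; ring
  rw [h (Q.refl i x), h3, h x]
  funext j
  simp

lemma pp_nonneg_of_root (x : Q.I → ℤ) (hx : Q.IsRoot x) : 0 ≤ Q.pp x := by
  have key : ∀ α, Q.InFund α → Q.bil α α ≤ 0 := by
    intro α hα
    rw [bil_expand]
    exact Finset.sum_nonpos fun i _ => mul_nonpos_of_nonneg_of_nonpos (hα.2.1 i) (hα.2.2.2 i)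
  induction hx with
  | simple i hi => rw [pp_ev_of_loopfree i hi]
  | fund α hα => have := key α hα; rw [bil_self] at this; linarith
  | neg_fund α hα =>
    have h1 : Q.pp (-α) = Q.pp α := by simp [pp]
    have := key α hα; rw [bil_self] at this; linarith
  | reflect i hi α hα ih => rw [pp_refl i hi]; exact ih

lemma pp_le_one (hP : Q.PosSemidef) (x : Q.I → ℤ) : Q.pp x ≤ 1 := by
  have := hP x
  rw [bil_self] at this
  linarith

lemma min_pos (hC : Q.Connected) {δ : Q.I → ℤ} (hδ : Q.IsMinImag δ) (i : Q.I) : 0 < δ i := by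
  have step : ∀ i j, Q.Adj i j → δ i = 0 → δ j = 0 := by
    intro i j ⟨a, ha⟩ hi
    have h := hδ.2.2.1 i
    rw [bil_eq] at h
    have h1 : ∑ k, 2 * δ k * Q.ev i k = 0 := by simp [ev, hi]
    rw [h1] at h
    have hnn : ∀ b ∈ (Finset.univ : Finset Q.A),
        0 ≤ δ (Q.h b) * Q.ev i (Q.t b) + δ (Q.t b) * Q.ev i (Q.h b) := by
      intro b _
      have e : ∀ k, 0 ≤ Q.ev i k := fun k => by simp only [ev]; split_ifs <;> simp
      exact add_nonneg (mul_nonneg (hδ.1 _) (e _)) (mul_nonneg (hδ.1 _) (e _))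
    have h2 := (Finset.sum_eq_zero_iff_of_nonneg hnn).1 (by linarith) a (Finset.mem_univ a)
    have p := hδ.1 j
    rcases ha with ⟨ha, hb⟩ | ⟨ha, hb⟩ <;> rw [ha, hb] at h2 <;> simp [ev, hi] at h2 <;>
      first | exact h2 | (split_ifs at h2 <;> simp_all)
  rcases lt_or_eq_of_le (hδ.1 i) with h | h
  · exact h
  · exfalso
    apply hδ.2.1
    funext j
    have := hC i j
    induction this with
    | refl => exact h.symm
    | tail _ hb ih => exact step _ _ hb ih

lemma null_mult (hP : Q.PosSemidef) (hC : Q.Connected) {δ : Q.I → ℤ} (hδ : Q.IsMinImag δ) :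
    ∀ (n : ℕ) (x : Q.I → ℤ), (∀ i, 0 ≤ x i) → Q.pp x = 1 → (∑ i, x i) ≤ n →
      ∃ k : ℕ, x = k • δ := by
  intro n
  induction n with
  | zero =>
    intro x hx _ hn
    refine ⟨0, ?_⟩
    have := (Finset.sum_eq_zero_iff_of_nonneg (fun i _ => hx i)).1
      (le_antisymm (by simpa using hn) (Finset.sum_nonneg fun i _ => hx i))
    funext i
    simpa using this i (Finset.mem_univ i)
  | succ n ih =>
    intro x hx hp hn
    by_cases h0 : x = 0
    · exact ⟨0, by simp [h0]⟩
    have hnull : Q.bil x x = 0 := by rw [bil_self, hp]; norm_num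
    have hge := hδ.2.2.2 x hx h0 (fun i => rad_of_null hP x _ hnull)
    have hdn : Q.bil δ δ = 0 := by
      rw [bil_expand]; exact Finset.sum_eq_zero fun i _ => by rw [hδ.2.2.1 i, mul_zero]
    have hxd : Q.bil (x + (-1 : ℤ) • δ) (x + (-1 : ℤ) • δ) = 0 := by
      rw [bil_add_left, bil_add_right, bil_add_right, bil_smul_left, bil_smul_right,
        bil_smul_left, bil_smul_right, hnull, hdn, rad_of_null hP x _ hnull,
        rad_of_null hP δ _ hdn]
      norm_num
    have hI : ∃ i, x i ≠ 0 := by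
      by_contra hh; push Not at hh; exact h0 (funext hh)
    obtain ⟨i, _⟩ := hI
    have hδs : 0 < ∑ i, δ i :=
      Finset.sum_pos (fun i _ => min_pos hC hδ i) ⟨i, Finset.mem_univ i⟩
    obtain ⟨k, hk⟩ := ih (x + (-1 : ℤ) • δ)
      (fun i => by have := hge i; simp; linarith)
      (by rw [bil_self] at hxd; linarith)
      (by
        simp only [Pi.add_apply, Pi.smul_apply, smul_eq_mul, Finset.sum_add_distrib,
          ← Finset.mul_sum]
        push_cast at hn
        linarith)
    refine ⟨k + 1, ?_⟩
    rw [add_smul, ← hk]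
    simp

lemma sign_of_real (hP : Q.PosSemidef) (hC : Q.Connected) {δ : Q.I → ℤ} (hδ : Q.IsMinImag δ)
    (x : Q.I → ℤ) (hx : Q.pp x = 0) : (∀ i, 0 ≤ x i) ∨ (∀ i, x i ≤ 0) := by
  -- a nonzero null nonnegative vector has full support
  have full : ∀ y : Q.I → ℤ, (∀ i, 0 ≤ y i) → Q.bil y y = 0 → y = 0 ∨ ∀ i, 0 < y i := by
    intro y hy hn
    obtain ⟨k, hk⟩ := null_mult hP hC hδ (∑ i, y i).toNat y hy
      (by rw [bil_self] at hn; linarith) (Int.self_le_toNat _)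
    rcases Nat.eq_zero_or_pos k with h | h
    · left; rw [hk, h]; simp
    · right; intro i
      rw [hk]
      have := min_pos hC hδ i
      simp only [Pi.smul_apply, nsmul_eq_mul]
      positivity
  set u : Q.I → ℤ := fun i => max (x i) 0 with hu
  set v : Q.I → ℤ := fun i => max (-x i) 0 with hv
  have hun : ∀ i, 0 ≤ u i := fun i => le_max_right _ _
  have hvn : ∀ i, 0 ≤ v i := fun i => le_max_right _ _
  have huv : ∀ i, u i * v i = 0 := by
    intro i
    rcases le_total 0 (x i) with h | h
    · have : v i = 0 := max_eq_right (by linarith)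
      rw [this, mul_zero]
    · have : u i = 0 := max_eq_right h
      rw [this, zero_mul]
  have hxuv : x = u + (-1 : ℤ) • v := by
    funext i
    rcases le_total 0 (x i) with h | h
    · have h1 : v i = 0 := max_eq_right (by linarith)
      have h2 : u i = x i := max_eq_left h
      simp [h1, h2]
    · have h1 : u i = 0 := max_eq_right h
      have h2 : v i = - x i := max_eq_left (by linarith)
      simp [h1, h2]
  have hb : Q.bil x x = 2 := by rw [bil_self, hx]; norm_num
  have hle := bil_nonpos Q u v hun hvn huv
  rw [hxuv, bil_add_left, bil_add_right, bil_add_right, bil_smul_left, bil_smul_right,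
        bil_smul_left, bil_smul_right, bil_comm Q v u] at hb
  have pu := hP u
  have pv := hP v
  have hcase : Q.bil u u = 0 ∨ Q.bil v v = 0 := by
    rw [bil_self] at *
    rw [bil_self Q v] at *
    omega
  rcases hcase with h | h
  · rcases full u hun h with h' | h'
    · right; intro i
      have := congrFun h' i
      have h2 : x i ≤ u i := le_max_left _ _
      simp at this; linarith
    · left; intro i
      by_contra hc
      have : u i = 0 := max_eq_right (by linarith)
      linarith [h' i]
  · rcases full v hvn h with h' | h'
    · left; intro i
      have := congrFun h' i
      have h2 : -x i ≤ v i := le_max_left _ _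
      simp at this; linarith
    · right; intro i
      by_contra hc
      have : v i = 0 := max_eq_right (by linarith)
      linarith [h' i]

lemma root_of_real (hP : Q.PosSemidef) (hC : Q.Connected) {δ : Q.I → ℤ} (hδ : Q.IsMinImag δ) :
    ∀ (n : ℕ) (x : Q.I → ℤ), (∀ i, 0 ≤ x i) → Q.pp x = 0 → (∑ i, x i) ≤ n →
      Q.IsRoot x := by
  intro n
  induction n with
  | zero =>
    intro x hx hp hn
    exfalso
    have h := (Finset.sum_eq_zero_iff_of_nonneg (fun i _ => hx i)).1
      (le_antisymm (by simpa using hn) (Finset.sum_nonneg fun i _ => hx i))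
    have : x = 0 := funext fun i => by simpa using h i (Finset.mem_univ i)
    rw [this] at hp
    simp [pp] at hp
  | succ n ih =>
    intro x hx hp hn
    have hb : Q.bil x x = 2 := by rw [bil_self, hp]; norm_num
    have hex : ∃ i, 0 < x i * Q.bil x (Q.ev i) := by
      by_contra hh
      push Not at hh
      have := Finset.sum_nonpos (s := Finset.univ) fun i _ => hh i
      rw [← bil_expand, hb] at this
      norm_num at this
    obtain ⟨i, hi⟩ := hex
    have hbi : 0 < Q.bil x (Q.ev i) := by
      by_contra hc
      push Not at hc
      exact absurd hi (not_lt.2 (mul_nonpos_of_nonneg_of_nonpos (hx i) hc))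
    have hlf : Q.Loopfree i := by
      by_contra hl
      have := rad_of_null hP _ x (null_of_loop hP i hl)
      rw [bil_comm] at this
      linarith
    have hpr : Q.pp (Q.refl i x) = 0 := by rw [pp_refl i hlf, hp]
    have happ : ∀ j, Q.refl i x j = x j - Q.bil x (Q.ev i) * (if j = i then 1 else 0) := by
      intro j; simp [refl, ev]
    rcases sign_of_real hP hC hδ _ hpr with h | h
    · rw [← refl_refl' i hlf x]
      refine IsRoot.reflect i hlf _ (ih _ h hpr ?_)
      simp only [happ, Finset.sum_sub_distrib, ← Finset.mul_sum]
      simp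
      push_cast at hn
      linarith
    · have hxe : x = x i • Q.ev i := by
        funext j
        by_cases hj : j = i
        · subst hj; simp [ev]
        · have h1 := h j
          rw [happ] at h1
          have h2 := hx j
          simp [hj] at h1
          simp [ev, hj]
          linarith
      have h1 : x i * (x i * 2) = 2 := by
        have h2 : Q.bil (Q.ev i) (Q.ev i) = 2 := by
          rw [bil_self, pp_ev_of_loopfree i hlf]; norm_num
        have h3 := hb
        rw [hxe, bil_smul_left, bil_smul_right, h2] at h3
        simpa [ev] using h3
      have h2 : x i = 1 := by have := hx i; nlinarith
      rw [hxe, h2, one_smul]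
      exact IsRoot.simple i hlf

lemma pp_add (x y : Q.I → ℤ) : Q.pp (x + y) = Q.pp x + Q.pp y - 1 - Q.bil x y := by
  have h := bil_self Q (x + y)
  rw [bil_add_left, bil_add_right, bil_add_right, bil_comm Q y x, bil_self, bil_self] at h
  linarith

section main
variable {K : Type} [Field K] {l : Q.I → K} {δ : Q.I → ℤ}

lemma pair_add (x y : Q.I → ℤ) : Q.pair K l (x + y) = Q.pair K l x + Q.pair K l y := by
  simp [pair, mul_add, Finset.sum_add_distrib]

lemma pair_sub (x y : Q.I → ℤ) : Q.pair K l (x - y) = Q.pair K l x - Q.pair K l y := by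
  simp [pair, mul_sub, Finset.sum_sub_distrib]

lemma ne_zero_of_real (x : Q.I → ℤ) (hp : Q.pp x = 0) : x ≠ 0 := by
  rintro rfl
  simp [pp] at hp

lemma mem_Rplus (hP : Q.PosSemidef) (hC : Q.Connected) (hδ : Q.IsMinImag δ)
    (x : Q.I → ℤ) (hx : ∀ i, 0 ≤ x i) (hp : Q.pp x = 0) (hl : Q.pair K l x = 0) :
    x ∈ Q.Rplus K l :=
  ⟨⟨root_of_real hP hC hδ (∑ i, x i).toNat x hx hp (Int.self_le_toNat _), hx,
    ne_zero_of_real x hp⟩, hl⟩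

lemma pp_delta (hδ : Q.IsMinImag δ) : Q.pp δ = 1 := by
  have hdn : Q.bil δ δ = 0 := by
    rw [bil_expand]; exact Finset.sum_eq_zero fun i _ => by rw [hδ.2.2.1 i, mul_zero]
  rw [bil_self] at hdn
  linarith

lemma bil_delta (hδ : Q.IsMinImag δ) (x : Q.I → ℤ) : Q.bil x δ = 0 := by
  rw [bil_comm, bil_expand]
  exact Finset.sum_eq_zero fun i _ => by rw [hδ.2.2.1 i, mul_zero]

lemma delta_mem (hC : Q.Connected) (hδ : Q.IsMinImag δ) (hl : Q.pair K l δ = 0) :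
    δ ∈ Q.Rplus K l := by
  refine ⟨⟨IsRoot.fund δ ⟨hδ.2.1, hδ.1, ?_, fun i => (hδ.2.2.1 i).le⟩, hδ.1, hδ.2.1⟩, hl⟩
  intro i j _ _
  have := hC i j
  exact Relation.ReflTransGen.mono
    (fun x y h => ⟨(min_pos hC hδ x).ne', (min_pos hC hδ y).ne', h⟩) _ _ this

/-- No splitting of a real element of `Σ_λ` into two elements of `R_λ^+`. -/
lemma sigma_indec (x y z : Q.I → ℤ) (hx : x ∈ Q.SigmaSet K l) (hp : Q.pp x = 0)
    (hy : y ∈ Q.Rplus K l) (hz : z ∈ Q.Rplus K l) : x ≠ y + z := by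
  intro h
  have := hx.2 2 ![y, z] le_rfl (by intro j; fin_cases j <;> simpa) (by simpa using h)
  simp only [Fin.sum_univ_two, Matrix.cons_val_zero, Matrix.cons_val_one] at this
  have h1 := pp_nonneg_of_root y hy.1.1
  have h2 := pp_nonneg_of_root z hz.1.1
  linarith

lemma sigma_cases (hP : Q.PosSemidef) (hC : Q.Connected) (hδ : Q.IsMinImag δ)
    (hl : Q.pair K l δ = 0) (x : Q.I → ℤ) (hx : x ∈ Q.SigmaSet K l) :
    x = δ ∨ (Q.pp x = 0 ∧ ∀ i, x i ≤ δ i) := by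
  have h0 := pp_nonneg_of_root x hx.1.1.1
  have h1 := pp_le_one hP x
  have hd := delta_mem hC hδ hl
  rcases (by omega : Q.pp x = 0 ∨ Q.pp x = 1) with hp | hp
  · right
    refine ⟨hp, ?_⟩
    have hxd : Q.pp (x - δ) = 0 := by
      have := pp_add (x - δ) δ
      rw [sub_add_cancel, bil_delta hδ, pp_delta hδ] at this
      linarith
    rcases sign_of_real hP hC hδ _ hxd with h | h
    · exfalso
      refine sigma_indec x (x - δ) δ hx hp (mem_Rplus hP hC hδ _ h hxd ?_) hd (by simp)
      rw [pair_sub, hl, hx.1.2, sub_zero]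
    · intro i; have := h i; simp at this; exact this
  · left
    obtain ⟨k, hk⟩ := null_mult hP hC hδ (∑ i, x i).toNat x hx.1.1.2.1 hp (Int.self_le_toNat _)
    by_cases hk2 : 2 ≤ k
    · exfalso
      have := hx.2 k (fun _ => δ) hk2 (fun _ => hd) (by simpa using hk)
      simp [pp_delta hδ, hp] at this
      omega
    · have : k = 0 ∨ k = 1 := by omega
      rcases this with rfl | rfl
      · exact absurd (by simpa using hk) hx.1.1.2.2
      · simpa using hk

lemma grow (hP : Q.PosSemidef) (hC : Q.Connected) (hδ : Q.IsMinImag δ)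
    (hl : Q.pair K l δ = 0) {ι : Type} [DecidableEq ι] (a : ι → Q.I → ℤ)
    (ha : ∀ t, a t ∈ Q.SigmaSet K l) (ha' : ∀ t, a t ≠ δ) (T : Finset ι) (m : ℕ)
    (hT : ∑ t ∈ T, a t = m • δ) :
    ∀ (n : ℕ) (S : Finset ι), S ⊆ T → (T \ S).card ≤ n → Q.pp (∑ t ∈ S, a t) = 0 →
      (∀ i, (∑ t ∈ S, a t) i ≤ δ i) → ∃ S' ⊆ T, ∑ t ∈ S', a t = δ := by
  intro n
  induction n with
  | zero =>
    intro S hS hn hp _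
    exfalso
    have h1 : T \ S = ∅ := Finset.card_eq_zero.1 (by omega)
    have h2 : S = T := Finset.Subset.antisymm hS (Finset.sdiff_eq_empty_iff_subset.1 h1)
    have h3 := bil_self Q (∑ t ∈ S, a t)
    rw [hp, h2, hT, ← natCast_zsmul, bil_smul_right, bil_delta hδ] at h3
    norm_num at h3
  | succ n ih =>
    intro S hS hn hp hle
    set β := ∑ t ∈ S, a t with hβ
    have hbb : Q.bil β β = 2 := by rw [bil_self, hp]; norm_num
    have htot : ∑ t ∈ T, Q.bil β (a t) = 0 := by
      rw [← bil_sum_right, hT, ← natCast_zsmul, bil_smul_right, bil_delta hδ, mul_zero]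
    have hSs : ∑ t ∈ S, Q.bil β (a t) = 2 := by
      rw [← bil_sum_right, ← hβ, hbb]
    have hex : ∃ t ∈ T \ S, Q.bil β (a t) < 0 := by
      by_contra hh
      push Not at hh
      have h1 := Finset.sum_nonneg hh
      have h2 := Finset.sum_sdiff (f := fun t => Q.bil β (a t)) hS
      linarith
    obtain ⟨t, ht, hneg⟩ := hex
    rw [Finset.mem_sdiff] at ht
    have hβn : ∀ i, 0 ≤ β i := by
      intro i
      rw [hβ, Finset.sum_apply]
      exact Finset.sum_nonneg fun s _ => (ha s).1.1.2.1 i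
    have hβl : Q.pair K l β = 0 := by
      rw [hβ]
      clear_value β
      clear hβ hS hn hp hle hbb htot hSs hneg ht hβn
      induction S using Finset.induction_on with
      | empty => simp [pair]
      | insert s S hs ih' => rw [Finset.sum_insert hs, pair_add, ih', (ha s).1.2, add_zero]
    have hat := (sigma_cases hP hC hδ hl (a t) (ha t)).resolve_left (ha' t)
    have hins : ∑ s ∈ insert t S, a s = β + a t := by
      rw [Finset.sum_insert ht.2, add_comm]
    have hsub : insert t S ⊆ T := Finset.insert_subset ht.1 hS
    have hpp := pp_add β (a t)
    rw [hp, hat.1] at hpp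
    have hp1 := pp_le_one hP (β + a t)
    rcases (by omega : Q.pp (β + a t) = 0 ∨ Q.pp (β + a t) = 1) with h | h
    · -- real root
      refine ih (insert t S) hsub ?_ (by rw [hins]; exact h) ?_
      · have hlt : T \ insert t S ⊂ T \ S := by
          refine ⟨Finset.sdiff_subset_sdiff le_rfl (Finset.subset_insert t S), fun hh => ?_⟩
          have := hh (Finset.mem_sdiff.2 ht)
          simp at this
        have := Finset.card_lt_card hlt
        omega
      · rw [hins]
        have hgd : Q.pp (β + a t - δ) = 0 := by
          have := pp_add (β + a t - δ) δ
          rw [sub_add_cancel, bil_delta hδ, pp_delta hδ] at this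
          linarith
        have hdb : Q.pp (δ - β) = 0 := by
          have := pp_add (δ - β) β
          have h3 : Q.bil (δ - β) β = -2 := by
            rw [show δ - β = δ + (-1 : ℤ) • β by simp [sub_eq_add_neg], bil_add_left,
              bil_smul_left, hbb, bil_comm, bil_delta hδ]
            norm_num
          rw [sub_add_cancel, h3, pp_delta hδ, hp] at this
          linarith
        rcases sign_of_real hP hC hδ _ hgd with h' | h'
        · exfalso
          refine sigma_indec (a t) (β + a t - δ) (δ - β) (ha t) hat.1
            (mem_Rplus hP hC hδ _ h' hgd ?_) (mem_Rplus hP hC hδ _ ?_ hdb ?_) (by abel)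
          · rw [pair_sub, pair_add, hβl, hl, (ha t).1.2]; simp
          · intro i; have := hle i; simp; linarith
          · rw [pair_sub, hβl, hl, sub_zero]
        · intro i; have := h' i; simp at this ⊢; linarith
    · refine ⟨insert t S, hsub, ?_⟩
      rw [hins]
      have hnn : ∀ i, 0 ≤ (β + a t) i := fun i => by
        have h1 := hβn i
        have h2 := (ha t).1.1.2.1 i
        simp; linarith
      obtain ⟨k, hk⟩ := null_mult hP hC hδ (∑ i, (β + a t) i).toNat _ hnn h (Int.self_le_toNat _)
      -- `β + a t` is nonzero and at most `2δ`; equality would force `a t = δ`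
      obtain ⟨i, hi⟩ : ∃ i, a t i ≠ δ i := by
        by_contra hh; push Not at hh; exact ha' t (funext hh)
      have hki := congrFun hk i
      have hdi := min_pos hC hδ i
      have h1 := hle i
      have h2 := lt_of_le_of_ne (hat.2 i) hi
      simp at hki
      have hk2 : (k : ℤ) < 2 := by nlinarith
      have hk0 : k ≠ 0 := by
        rintro rfl
        apply (ha t).1.1.2.2
        funext j
        have h3 := congrFun hk j
        have h4 := hβn j
        have h5 := (ha t).1.1.2.1 j
        simp at h3 ⊢
        linarith
      have : k = 1 := by omega
      rw [hk, this, one_smul]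

lemma exists_sub (hP : Q.PosSemidef) (hC : Q.Connected) (hδ : Q.IsMinImag δ)
    (hl : Q.pair K l δ = 0) {ι : Type} [DecidableEq ι] (a : ι → Q.I → ℤ)
    (ha : ∀ t, a t ∈ Q.SigmaSet K l) (T : Finset ι) (m : ℕ)
    (hT : ∑ t ∈ T, a t = (m + 1) • δ) : ∃ S ⊆ T, ∑ t ∈ S, a t = δ := by
  by_cases hd : ∃ t ∈ T, a t = δ
  · obtain ⟨t, ht, h⟩ := hd
    exact ⟨{t}, by simpa using ht, by simpa using h⟩
  push Not at hd
  have hne : T.Nonempty := by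
    rw [Finset.nonempty_iff_ne_empty]
    rintro rfl
    apply hδ.2.1
    rw [Finset.sum_empty] at hT
    exact (smul_eq_zero.1 hT.symm).resolve_left (by omega)
  obtain ⟨t, ht⟩ := hne
  -- pass to the subtype of `T`
  have hT' : ∑ s ∈ T.attach, a s.1 = (m + 1) • δ := by rw [Finset.sum_attach, hT]
  have hat := (sigma_cases hP hC hδ hl (a t) (ha t)).resolve_left (hd t ht)
  obtain ⟨S', _, h⟩ := grow hP hC hδ hl (fun s : T => a s.1) (fun s => ha s.1)
    (fun s => hd s.1 s.2) T.attach (m + 1) hT' _ {⟨t, ht⟩} (by simp) le_rfl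
    (by simpa using hat.1) (by simpa using hat.2)
  refine ⟨S'.map (Function.Embedding.subtype _), ?_, by simpa using h⟩
  intro s hs
  obtain ⟨u, _, rfl⟩ := Finset.mem_map.1 hs
  exact u.2

lemma partition_exists (hP : Q.PosSemidef) (hC : Q.Connected) (hδ : Q.IsMinImag δ)
    (hl : Q.pair K l δ = 0) {ι : Type} [DecidableEq ι] (a : ι → Q.I → ℤ)
    (ha : ∀ t, a t ∈ Q.SigmaSet K l) : ∀ (m : ℕ) (T : Finset ι), ∑ t ∈ T, a t = m • δ →
      ∃ P : ι → ℕ, (∀ t ∈ T, P t < m) ∧ ∀ s < m, ∑ t ∈ T with P t = s, a t = δ := by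
  intro m
  induction m with
  | zero =>
    intro T hT
    refine ⟨fun _ => 0, fun t ht => ?_, fun s hs => absurd hs (by omega)⟩
    exfalso
    apply (ha t).1.1.2.2
    funext i
    have h1 := congrFun hT i
    rw [Finset.sum_apply] at h1
    have := (Finset.sum_eq_zero_iff_of_nonneg (fun s _ => (ha s).1.1.2.1 i)).1
      (by simpa using h1) t ht
    simpa using this
  | succ m ih =>
    intro T hT
    obtain ⟨S, hS, hSs⟩ := exists_sub hP hC hδ hl a ha T m hT
    have h1 := Finset.sum_sdiff (f := a) hS
    rw [hSs, hT, add_smul, one_smul] at h1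
    obtain ⟨P, hPl, hPs⟩ := ih (T \ S) (add_right_cancel h1)
    refine ⟨fun t => if t ∈ S then m else P t, fun t ht => ?_, fun s hs => ?_⟩
    · dsimp only
      split_ifs with h
      · omega
      · have := hPl t (Finset.mem_sdiff.2 ⟨ht, h⟩); omega
    · by_cases hsm : s = m
      · rw [← hSs]
        congr 1
        ext t
        simp only [Finset.mem_filter]
        constructor
        · rintro ⟨ht, h⟩
          by_contra hc
          rw [if_neg hc] at h
          have := hPl t (Finset.mem_sdiff.2 ⟨ht, hc⟩)
          omega
        · intro h
          exact ⟨hS h, by rw [if_pos h, hsm]⟩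
      · rw [← hPs s (by omega)]
        congr 1
        ext t
        simp only [Finset.mem_filter, Finset.mem_sdiff]
        constructor
        · rintro ⟨ht, h⟩
          by_cases hc : t ∈ S
          · rw [if_pos hc] at h; omega
          · rw [if_neg hc] at h; exact ⟨⟨ht, hc⟩, h⟩
        · rintro ⟨⟨ht, hc⟩, h⟩
          exact ⟨ht, by rw [if_neg hc]; exact h⟩

end main

end FinQuiver

/-- for an extended Dynkin quiver with minimal positive imaginary
root `δ` and `λ·δ = 0`, every decomposition of `mδ` into elements of `Σ_λ`
refines the decomposition `mδ = δ + ⋯ + δ`. -/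
theorem stmt12 (Q : FinQuiver) (K : Type) [Field K] [CharZero K] [IsAlgClosed K]
    (l : Q.I → K) (δ : Q.I → ℤ)
    (hQ : Q.IsExtDynkin) (hδ : Q.IsMinImag δ) (hl : Q.pair K l δ = 0)
    (m : ℕ) (hm : 1 ≤ m)
    (q : ℕ) (a : Fin q → (Q.I → ℤ)) (ha : ∀ t, a t ∈ Q.SigmaSet K l)
    (hsum : (∑ t, a t) = m • δ) :
    ∃ P : Fin q → Fin m,
      ∀ s : Fin m, (∑ t ∈ Finset.univ.filter (fun t => P t = s), a t) = δ := by
  obtain ⟨P, hPl, hPs⟩ := FinQuiver.partition_exists hQ.2.1 hQ.1 hδ hl a ha m Finset.univ hsum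
  refine ⟨fun t => ⟨P t, hPl t (Finset.mem_univ t)⟩, fun s => ?_⟩
  rw [← hPs s.1 s.2]
  simp only [Fin.ext_iff]

end
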